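/- Let X and Y be disjoint subsets of the node set V of a maxPDAG G. If (i) Y ⊆ possde(X,G) and (ii) there exists a set Z ⊆ V \ (X ∪ Y) that is a valid adjustment set relative to (X,Y) in G (generalised adjustment criterion), then the O-set O(X,Y,G) = pa(cn(X,Y,G),G) \ forb(X,Y,G) is a valid adjustment set relative to (X,Y) in G. -/

import Mathlib

/-! Framework for causal graphs: mixed graphs (directed, undirected, bi-directed edges),
paths as lists of typed steps, (possibly) directed paths, descendants, causal nodes,
forbidden sets, (definite-status) blocking, valid adjustment sets, Meek's rules,
maxPDAGs, latent/forbidden projections, d-separation. -/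

namespace Causal

universe u

variable {V : Type u}

/-- A mixed graph with directed, undirected and bi-directed edge relations. -/
structure MixedGraph (V : Type u) where
  dir : V → V → Prop
  undir : V → V → Prop
  bidir : V → V → Prop

/-- The kind of an edge as traversed along a path: forward directed (`a → b`),
backward directed (`a ← b`), undirected (`a − b`), or bi-directed (`a ↔ b`). -/
inductive EdgeKind : Type
  | fwd | bwd | und | bid
  deriving DecidableEq

/-- A step of a path: source node, kind of traversed edge, destination node. -/
abbrev Step (V : Type u) := V × EdgeKind × V

namespace Step
def src (s : Step V) : V := s.1
def kind (s : Step V) : EdgeKind := s.2.1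
def dst (s : Step V) : V := s.2.2
end Step

/-- The step `s` traverses an actual edge of `G`. Undirected and bi-directed
edge relations are used symmetrically. -/
def stepOK (G : MixedGraph V) (s : Step V) : Prop :=
  match Step.kind s with
  | EdgeKind.fwd => G.dir (Step.src s) (Step.dst s)
  | EdgeKind.bwd => G.dir (Step.dst s) (Step.src s)
  | EdgeKind.und => G.undir (Step.src s) (Step.dst s) ∨ G.undir (Step.dst s) (Step.src s)
  | EdgeKind.bid => G.bidir (Step.src s) (Step.dst s) ∨ G.bidir (Step.dst s) (Step.src s)

/-- The sequence of nodes visited by a list of steps. -/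
def pathNodes : List (Step V) → List V
  | [] => []
  | s :: rest => Step.src s :: (s :: rest).map Step.dst

/-- `p` is a path in `G`: a nonempty chain of valid steps visiting distinct nodes. -/
structure IsPath (G : MixedGraph V) (p : List (Step V)) : Prop where
  nonempty : p ≠ []
  valid : ∀ s ∈ p, stepOK G s
  chain : p.Chain' (fun s t => Step.dst s = Step.src t)
  nodup : (pathNodes p).Nodup

/-- The path starts at node `a`. -/
def startsAt (p : List (Step V)) (a : V) : Prop := (pathNodes p).head? = some a

/-- The path ends at node `b`. -/
def endsAt (p : List (Step V)) (b : V) : Prop := (pathNodes p).getLast? = some b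

/-- The non-endpoint (interior) nodes of the path. -/
def interiorNodes (p : List (Step V)) : List V := ((pathNodes p).drop 1).dropLast

/-- Consecutive pairs of steps of a path. -/
def stepPairs (p : List (Step V)) : List (Step V × Step V) := p.zip p.tail

/-- Does an edge of this kind have an arrowhead at the destination of its step? -/
def headAtDst : EdgeKind → Prop
  | EdgeKind.fwd => True | EdgeKind.bwd => False
  | EdgeKind.und => False | EdgeKind.bid => True

/-- Does an edge of this kind have an arrowhead at the source of its step? -/
def headAtSrc : EdgeKind → Prop
  | EdgeKind.fwd => False | EdgeKind.bwd => True
  | EdgeKind.und => False | EdgeKind.bid => True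

/-- `v` is a collider on the path `p`: both adjacent edges have an arrowhead at `v`. -/
def colliderAt (p : List (Step V)) (v : V) : Prop :=
  ∃ q ∈ stepPairs p, Step.dst q.1 = v ∧ headAtDst (Step.kind q.1) ∧ headAtSrc (Step.kind q.2)

/-- `v` is a non-endpoint non-collider on the path `p`. -/
def nonColliderAt (p : List (Step V)) (v : V) : Prop :=
  v ∈ interiorNodes p ∧ ¬ colliderAt p v

/-- Two nodes are adjacent if they are joined by some edge. -/
def adjacent (G : MixedGraph V) (a b : V) : Prop :=
  G.dir a b ∨ G.dir b a ∨ G.undir a b ∨ G.undir b a ∨ G.bidir a b ∨ G.bidir b a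

/-- `v` is a definite non-collider on `p`: at least one adjacent edge is directed
out of `v`, or both adjacent edges are undirected and the neighbours of `v` on `p`
are non-adjacent. -/
def defNonColliderAt (G : MixedGraph V) (p : List (Step V)) (v : V) : Prop :=
  ∃ q ∈ stepPairs p, Step.dst q.1 = v ∧
    (Step.kind q.1 = EdgeKind.bwd ∨ Step.kind q.2 = EdgeKind.fwd ∨
      (Step.kind q.1 = EdgeKind.und ∧ Step.kind q.2 = EdgeKind.und ∧
        ¬ adjacent G (Step.src q.1) (Step.dst q.2)))

/-- Every non-endpoint node of `p` is a collider or a definite non-collider. -/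
def definiteStatus (G : MixedGraph V) (p : List (Step V)) : Prop :=
  ∀ q ∈ stepPairs p,
    (headAtDst (Step.kind q.1) ∧ headAtSrc (Step.kind q.2)) ∨
    (Step.kind q.1 = EdgeKind.bwd ∨ Step.kind q.2 = EdgeKind.fwd ∨
      (Step.kind q.1 = EdgeKind.und ∧ Step.kind q.2 = EdgeKind.und ∧
        ¬ adjacent G (Step.src q.1) (Step.dst q.2)))

/-- All steps of the path traverse directed edges forwards (a causal/directed path). -/
def allFwd (p : List (Step V)) : Prop := ∀ s ∈ p, Step.kind s = EdgeKind.fwd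

/-- `p` is a directed (causal) path in `G` from `a` to `b`. -/
def directedPathFromTo (G : MixedGraph V) (p : List (Step V)) (a b : V) : Prop :=
  IsPath G p ∧ allFwd p ∧ startsAt p a ∧ endsAt p b

/-- `p` is possibly directed: every edge is undirected or traversed forwards, and
there are no indices `i < j` with a directed edge from the `j`-th to the `i`-th node. -/
def possiblyDirected (G : MixedGraph V) (p : List (Step V)) : Prop :=
  (∀ s ∈ p, Step.kind s = EdgeKind.fwd ∨ Step.kind s = EdgeKind.und) ∧
  (pathNodes p).Pairwise (fun a b => ¬ G.dir b a)

/-- `b` is a descendant of `a`: `b = a` or a directed path from `a` to `b` exists. -/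
def descendant (G : MixedGraph V) (a b : V) : Prop :=
  a = b ∨ ∃ p, directedPathFromTo G p a b

/-- The descendants of a node set. -/
def deSet (G : MixedGraph V) (A : Set V) : Set V := {b | ∃ a ∈ A, descendant G a b}

/-- `b` is a possible descendant of `a`. -/
def possDescendant (G : MixedGraph V) (a b : V) : Prop :=
  a = b ∨ ∃ p, IsPath G p ∧ possiblyDirected G p ∧ startsAt p a ∧ endsAt p b

/-- The possible descendants of a node set. -/
def possdeSet (G : MixedGraph V) (A : Set V) : Set V := {b | ∃ a ∈ A, possDescendant G a b}

/-- `p` is a proper path from `X` to `Y`: only its first node lies in `X`. -/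
def properFromTo (G : MixedGraph V) (p : List (Step V)) (X Y : Set V) : Prop :=
  IsPath G p ∧ (∃ a ∈ X, startsAt p a) ∧ (∃ b ∈ Y, endsAt p b) ∧
    ∀ v ∈ (pathNodes p).tail, v ∉ X

/-- The causal nodes: nodes on proper directed paths from `X` to `Y`, excluding `X`. -/
def cn (G : MixedGraph V) (X Y : Set V) : Set V :=
  {v | v ∉ X ∧ ∃ p, properFromTo G p X Y ∧ allFwd p ∧ v ∈ pathNodes p}

/-- The possibly causal nodes: nodes on proper possibly directed paths from `X` to `Y`,
excluding `X`. -/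
def posscn (G : MixedGraph V) (X Y : Set V) : Set V :=
  {v | v ∉ X ∧ ∃ p, properFromTo G p X Y ∧ possiblyDirected G p ∧ v ∈ pathNodes p}

/-- The forbidden set for DAG-like graphs: `de(cn(X,Y,G),G) ∪ X`. -/
def forbD (G : MixedGraph V) (X Y : Set V) : Set V := deSet G (cn G X Y) ∪ X

/-- The forbidden set for maxPDAGs: `possde(posscn(X,Y,G),G) ∪ X`. -/
def forbP (G : MixedGraph V) (X Y : Set V) : Set V := possdeSet G (posscn G X Y) ∪ X

/-- Parents of a node set (via directed edges). -/
def paSet (G : MixedGraph V) (A : Set V) : Set V := {w | ∃ a ∈ A, G.dir w a}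

/-- The O-set for DAG-like graphs: `pa(cn(X,Y,G),G) \ forb(X,Y,G)`. -/
def OsetD (G : MixedGraph V) (X Y : Set V) : Set V := paSet G (cn G X Y) \ forbD G X Y

/-- The O-set for maxPDAGs: `pa(cn(X,Y,G),G) \ forb(X,Y,G)`. -/
def OsetP (G : MixedGraph V) (X Y : Set V) : Set V := paSet G (cn G X Y) \ forbP G X Y

/-- `v` is an ancestor (via directed paths) of some node of `C`. -/
def ancestorOfSome (G : MixedGraph V) (v : V) (C : Set V) : Prop :=
  ∃ c ∈ C, descendant G v c

/-- The path `p` is blocked by `C`: it contains a non-collider in `C` or a collider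
that is not an ancestor of any node of `C`. -/
def blocked (G : MixedGraph V) (p : List (Step V)) (C : Set V) : Prop :=
  (∃ v ∈ C, nonColliderAt p v) ∨ (∃ v, colliderAt p v ∧ ¬ ancestorOfSome G v C)

/-- The definite-status path `p` is blocked by `C`: it contains a definite non-collider
in `C` or a collider that is not an ancestor of any node of `C`. -/
def blockedDef (G : MixedGraph V) (p : List (Step V)) (C : Set V) : Prop :=
  (∃ v ∈ C, defNonColliderAt G p v) ∨ (∃ v, colliderAt p v ∧ ¬ ancestorOfSome G v C)

/-- Generalised adjustment criterion for DAGs/ADMGs: `Z` is disjoint from `X ∪ Y` and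
from the forbidden set, and every proper non-causal path from `X` to `Y` is blocked. -/
def validAdjDAG (G : MixedGraph V) (X Y Z : Set V) : Prop :=
  Z ∩ (X ∪ Y) = ∅ ∧ Z ∩ forbD G X Y = ∅ ∧
  ∀ p, properFromTo G p X Y → ¬ allFwd p → blocked G p Z

/-- `G` is amenable relative to `(X,Y)`: every proper possibly directed path from `X`
to `Y` starts with a directed edge out of `X`. -/
def amenable (G : MixedGraph V) (X Y : Set V) : Prop :=
  ∀ p, properFromTo G p X Y → possiblyDirected G p →
    ∃ s rest, p = s :: rest ∧ Step.kind s = EdgeKind.fwd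

/-- Generalised adjustment criterion for maxPDAGs: `Z` is disjoint from `X ∪ Y`,
`G` is amenable relative to `(X,Y)`, `Z` avoids the forbidden set, and every proper
non-causal definite-status path from `X` to `Y` is blocked by `Z`. -/
def validAdjMax (G : MixedGraph V) (X Y Z : Set V) : Prop :=
  Z ∩ (X ∪ Y) = ∅ ∧ amenable G X Y ∧ Z ∩ forbP G X Y = ∅ ∧
  ∀ p, properFromTo G p X Y → definiteStatus G p → ¬ possiblyDirected G p →
    blockedDef G p Z

/-- A PDAG: a simple graph with only directed and undirected edges and
no directed cycles. -/
structure IsPDAG (G : MixedGraph V) : Prop where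
  no_bidir : ∀ a b, ¬ G.bidir a b
  undir_symm : ∀ a b, G.undir a b → G.undir b a
  dir_irrefl : ∀ a, ¬ G.dir a a
  undir_irrefl : ∀ a, ¬ G.undir a a
  simple_dd : ∀ a b, G.dir a b → ¬ G.dir b a
  simple_du : ∀ a b, G.dir a b → ¬ G.undir a b
  acyclic : ∀ a b, (∃ p, directedPathFromTo G p a b) → ¬ G.dir b a

/-- A DAG: a PDAG without undirected edges. -/
structure IsDAG (G : MixedGraph V) extends IsPDAG G : Prop where
  no_undir : ∀ a b, ¬ G.undir a b

/-- A maximally oriented PDAG: a PDAG closed under Meek's rules R1–R4. -/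
structure IsMaxPDAG (G : MixedGraph V) extends IsPDAG G : Prop where
  meek1 : ∀ a b c, G.dir a b → G.undir b c → ¬ adjacent G a c → G.dir b c
  meek2 : ∀ a b c, G.dir a b → G.dir b c → G.undir a c → G.dir a c
  meek3 : ∀ a b c d, G.undir a b → G.undir a c → G.undir a d → G.dir b d → G.dir c d →
      ¬ adjacent G b c → G.dir a d
  meek4 : ∀ a b c d, G.undir a b → G.dir a c → G.undir b c → G.dir c d → G.undir b d →
      G.dir b d

/-- The first edge of the path has an arrowhead at the first node. -/
def startsWithArrowIn (p : List (Step V)) : Prop :=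
  ∃ s rest, p = s :: rest ∧ headAtSrc (Step.kind s)

/-- The last edge of the path has an arrowhead at the last node. -/
def endsWithArrowIn (p : List (Step V)) : Prop :=
  ∃ s rest, p = rest ++ [s] ∧ headAtDst (Step.kind s)

/-- Projection of `G` over the node set `F`: the graph on the nodes outside `F` with
(i) a directed edge `a → b` iff `G` has a directed path from `a` to `b` with all
non-endpoint nodes in `F`; (ii) a bi-directed edge `a ↔ b` iff `G` has a path with
at least one non-endpoint node, of the form `a ← ⋯ → b`, on which every non-endpoint
node is a non-collider and lies in `F`; (iii) an undirected edge `a − b` iff `G` has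
the undirected edge `a − b`. -/
def forbProjection (G : MixedGraph V) (F : Set V) : MixedGraph V where
  dir a b := a ∉ F ∧ b ∉ F ∧
    ∃ p, directedPathFromTo G p a b ∧ ∀ v ∈ interiorNodes p, v ∈ F
  bidir a b := a ∉ F ∧ b ∉ F ∧
    ∃ p, IsPath G p ∧ startsAt p a ∧ endsAt p b ∧ interiorNodes p ≠ [] ∧
      startsWithArrowIn p ∧ endsWithArrowIn p ∧
      ∀ v ∈ interiorNodes p, v ∈ F ∧ ¬ colliderAt p v
  undir a b := a ∉ F ∧ b ∉ F ∧ G.undir a b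

/-- The forbidden projection of a DAG `D` with respect to `(X,Y)`:
the latent projection over `forb(X,Y,D) \ (X ∪ Y)`. -/
def dagProj (D : MixedGraph V) (X Y : Set V) : MixedGraph V :=
  forbProjection D (forbD D X Y \ (X ∪ Y))

/-- The forbidden projection of a maxPDAG `G` with respect to `(X,Y)`:
the projection over `forb(X,Y,G) \ (X ∪ Y)`. -/
def maxProj (G : MixedGraph V) (X Y : Set V) : MixedGraph V :=
  forbProjection G (forbP G X Y \ (X ∪ Y))

/-- `A` and `B` are d-separated given `C` in `G`: every path between a node of `A`
and a node of `B` is blocked by `C`. -/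
def dSep (G : MixedGraph V) (A B C : Set V) : Prop :=
  ∀ p a b, a ∈ A → b ∈ B → IsPath G p → startsAt p a → endsAt p b → blocked G p C

/-- A v-structure `a → b ← c` with `a`, `c` non-adjacent. -/
def vStructure (G : MixedGraph V) (a b c : V) : Prop :=
  a ≠ c ∧ G.dir a b ∧ G.dir c b ∧ ¬ adjacent G a c

/-- The DAG `D` is represented by the maxPDAG `G` (i.e. `D ∈ [G]`): `D` is a DAG
with the same adjacencies and v-structures as `G`, and every directed edge of `G`
occurs in `D` with the same orientation. -/
def represents (G D : MixedGraph V) : Prop :=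
  IsDAG D ∧ (∀ a b, adjacent G a b ↔ adjacent D a b) ∧
  (∀ a b c, vStructure G a b c ↔ vStructure D a b c) ∧
  (∀ a b, G.dir a b → D.dir a b)

/-- One step of the pruning procedure: remove from `Z` a node `z` such that `Y` is
d-separated from `z` given `{X} ∪ (Z \ {z})`. -/
def pruneStep (G : MixedGraph V) (X Y : V) (Z Z' : Set V) : Prop :=
  ∃ z ∈ Z, dSep G {Y} {z} ({X} ∪ (Z \ {z})) ∧ Z' = Z \ {z}

/-- `Z'` is a possible result of the pruning procedure started at `Z`: it is reachable
by pruning steps and no further node can be removed. -/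
def pruneResult (G : MixedGraph V) (X Y : V) (Z Z' : Set V) : Prop :=
  Relation.ReflTransGen (pruneStep G X Y) Z Z' ∧
  ∀ z ∈ Z', ¬ dSep G {Y} {z} ({X} ∪ (Z' \ {z}))

end Causal

/-! Under amenability the forbidden set is `F ∪ X`, where `F` is the set of descendants of the
possibly causal nodes. The point is that `F` is closed under undirected edges `v − w`: some `t ∈ X`
has a directed path to `v`, so by R1 and R2 there is a directed path from `t` to `w` or an edge
`t − w`, and the latter would start a proper possibly directed path from `X` to `Y`. R4 ensures
that no directed path leads back to the start of a possibly directed path, so that directed edges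
can be prepended to possibly directed paths.

Now let a proper definite-status path from `X` to `Y` not be blocked by the O-set. Walking along it
backwards from `Y`, we see that all its nodes after the first lie in `F`. Let `b ∈ F` and let `a` be
the node before it. If the edge is `a ← b` or `a − b`, then `a ∈ F` by closure. If it is `a → b`,
then the path has no collider after `a`, since such a collider would lie in `F` and hence have no
descendant in the O-set. So the path is directed from `a` on, `b` is a causal node, and `a` is a
definite non-collider and a parent of `b`; not being in the O-set, it is forbidden. A set disjoint
from `F` blocks such a path if and only if the path has a collider, so no valid adjustment set
blocks it either. -/

namespace Causal

open Relation

variable {V : Type*} {G : MixedGraph V} {X Y A C : Set V} {a b c t v w : V} {l : List V}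
  {p q : List (Step V)} {s s' : Step V}

section NodeLists

/-- An edge that can be traversed from `a` to `b` by a possibly directed path. -/
def PossEdge (G : MixedGraph V) (a b : V) : Prop := G.dir a b ∨ G.undir a b

/-- `l` is the node sequence of a possibly directed path. In contrast to `possiblyDirected`, which
is about lists of steps, the path may be trivial, and its nodes are required to be distinct. -/
structure IsPossDirected (G : MixedGraph V) (l : List V) : Prop where
  isChain : l.IsChain (PossEdge G)
  pairwise : l.Pairwise fun a b => a ≠ b ∧ ¬ G.dir b a

/-- `l` is the node sequence of a possibly directed path outside `X` with its last node in `Y`: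
what is left of a proper possibly directed path from `X` to `Y` when an initial part containing
the first node is cut off. -/
structure IsPossTail (G : MixedGraph V) (X Y : Set V) (l : List V) : Prop where
  isPossDirected : IsPossDirected G l
  notMem : ∀ v ∈ l, v ∉ X
  getLast_mem : ∃ y ∈ Y, l.getLast? = some y

open Classical in
/-- The steps of the path visiting the given nodes in turn, if consecutive nodes are joined by
`PossEdge`s; the kind of each step is read off the graph. -/
noncomputable def stepsOfNodes (G : MixedGraph V) : List V → List (Step V)
  | a :: b :: l => (a, if G.dir a b then .fwd else .und, b) :: stepsOfNodes G (b :: l)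
  | _ => []

theorem IsPossDirected.nodup (h : IsPossDirected G l) : l.Nodup := h.pairwise.imp And.left

theorem IsPossDirected.right_of_append {l₁ l₂ : List V} (h : IsPossDirected G (l₁ ++ l₂)) :
    IsPossDirected G l₂ :=
  ⟨h.isChain.right_of_append, (List.pairwise_append.1 h.pairwise).2.1⟩

theorem isPossDirected_cons_cons :
    IsPossDirected G (a :: b :: l) ↔
      PossEdge G a b ∧ (∀ v ∈ b :: l, a ≠ v ∧ ¬ G.dir v a) ∧ IsPossDirected G (b :: l) := by
  constructor
  · rintro ⟨hc, hp⟩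
    rw [List.isChain_cons_cons] at hc
    rw [List.pairwise_cons] at hp
    exact ⟨hc.1, hp.1, hc.2, hp.2⟩
  · rintro ⟨hab, hl, hc, hp⟩
    exact ⟨List.isChain_cons_cons.2 ⟨hab, hc⟩, List.pairwise_cons.2 ⟨hl, hp⟩⟩

theorem IsPossTail.right_of_append {l₁ : List V} (h : IsPossTail G X Y (l₁ ++ a :: l)) :
    IsPossTail G X Y (a :: l) where
  isPossDirected := h.isPossDirected.right_of_append
  notMem v hv := h.notMem v (List.mem_append_right _ hv)
  getLast_mem := by
    simpa only [List.getLast?_append_of_ne_nil _ (List.cons_ne_nil a l)] using h.getLast_mem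

theorem IsPossTail.tail (h : IsPossTail G X Y (a :: b :: l)) : IsPossTail G X Y (b :: l) :=
  IsPossTail.right_of_append (l₁ := [a]) h

theorem IsPossTail.cons (h : IsPossTail G X Y (b :: l)) (ha : a ∉ X)
    (hp : IsPossDirected G (a :: b :: l)) : IsPossTail G X Y (a :: b :: l) where
  isPossDirected := hp
  notMem := List.forall_mem_cons.2 ⟨ha, h.notMem⟩
  getLast_mem := by simpa only [List.getLast?_cons_cons] using h.getLast_mem

theorem IsPossTail.isPossDirected_cons (h : IsPossTail G X Y (w :: l)) (ht : t ∈ X)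
    (htw : PossEdge G t w) (hdir : ∀ v ∈ w :: l, ¬ G.dir v t) : IsPossDirected G (t :: w :: l) :=
  isPossDirected_cons_cons.2
    ⟨htw, fun v hv => ⟨fun htv => h.notMem v hv (htv ▸ ht), hdir v hv⟩, h.isPossDirected⟩

end NodeLists

section NodeListsToPaths

theorem map_dst_stepsOfNodes (a : V) (l : List V) :
    (stepsOfNodes G (a :: l)).map Step.dst = l := by
  induction l generalizing a with
  | nil => rfl
  | cons b l ih => exact congrArg (b :: ·) (ih b)

theorem pathNodes_stepsOfNodes (a b : V) (l : List V) :
    pathNodes (stepsOfNodes G (a :: b :: l)) = a :: b :: l :=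
  congrArg (a :: ·) (map_dst_stepsOfNodes a (b :: l))

theorem rel_of_mem_stepsOfNodes {R : V → V → Prop} (hl : l.IsChain R)
    (hs : s ∈ stepsOfNodes G l) : R s.src s.dst := by
  induction l using stepsOfNodes.induct with
  | case1 a b l ih =>
    rw [List.isChain_cons_cons] at hl
    rcases List.mem_cons.1 hs with rfl | hs
    exacts [hl.1, ih hl.2 hs]
  | case2 l hl' => simp [stepsOfNodes] at hs

open Classical in
theorem kind_of_mem_stepsOfNodes (hs : s ∈ stepsOfNodes G l) :
    s.kind = if G.dir s.src s.dst then .fwd else .und := by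
  induction l using stepsOfNodes.induct with
  | case1 a b l ih =>
    rcases List.mem_cons.1 hs with rfl | hs
    exacts [rfl, ih hs]
  | case2 l hl' => simp [stepsOfNodes] at hs

theorem isChain_stepsOfNodes (l : List V) :
    (stepsOfNodes G l).IsChain fun s s' => s.dst = s'.src := by
  induction l using stepsOfNodes.induct with
  | case1 a b l ih =>
    cases l with
    | nil => simp [stepsOfNodes]
    | cons c l => exact List.isChain_cons_cons.2 ⟨rfl, ih⟩
  | case2 l hl' => simp [stepsOfNodes]

theorem isPath_stepsOfNodes (hl : (a :: b :: l).IsChain (PossEdge G))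
    (hnd : (a :: b :: l).Nodup) : IsPath G (stepsOfNodes G (a :: b :: l)) where
  nonempty := List.cons_ne_nil _ _
  valid s hs := by
    have hedge := rel_of_mem_stepsOfNodes hl hs
    have hkind := kind_of_mem_stepsOfNodes hs
    by_cases hdir : G.dir s.src s.dst
    · simpa only [stepOK, hkind, if_pos hdir] using hdir
    · simpa only [stepOK, hkind, if_neg hdir] using .inl (hedge.resolve_left hdir)
  chain := isChain_stepsOfNodes _
  nodup := by rwa [pathNodes_stepsOfNodes]

theorem allFwd_stepsOfNodes (hl : l.IsChain G.dir) : allFwd (stepsOfNodes G l) := fun _ hs => by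
  rw [kind_of_mem_stepsOfNodes hs, if_pos (rel_of_mem_stepsOfNodes hl hs)]

theorem possiblyDirected_stepsOfNodes (h : IsPossDirected G (a :: b :: l)) :
    possiblyDirected G (stepsOfNodes G (a :: b :: l)) := by
  refine ⟨fun s hs => ?_, ?_⟩
  · rw [kind_of_mem_stepsOfNodes hs]
    split_ifs <;> simp
  · rw [pathNodes_stepsOfNodes]
    exact h.pairwise.imp And.right

theorem properFromTo_stepsOfNodes (ha : a ∈ X) (htail : IsPossTail G X Y (b :: l))
    (h : IsPossDirected G (a :: b :: l)) :
    properFromTo G (stepsOfNodes G (a :: b :: l)) X Y := by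
  refine ⟨isPath_stepsOfNodes h.isChain h.nodup, ⟨a, ha, rfl⟩, ?_, ?_⟩
  · simpa only [endsAt, pathNodes_stepsOfNodes, List.getLast?_cons_cons] using htail.getLast_mem
  · simpa only [pathNodes_stepsOfNodes, List.tail_cons] using htail.notMem

end NodeListsToPaths

section PathsToNodeLists

theorem isChain_pathNodes {R : V → V → Prop} (hp : p.IsChain fun s s' => s.dst = s'.src)
    (hR : ∀ s ∈ p, R s.src s.dst) : (pathNodes p).IsChain R := by
  induction p with
  | nil => exact .nil
  | cons s p ih =>
    rw [List.forall_mem_cons] at hR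
    have hrest := ih hp.tail hR.2
    cases p with
    | nil => exact List.isChain_pair.2 hR.1
    | cons s' p =>
      have hss' : s.dst = s'.src := (List.isChain_cons_cons.1 hp).1
      refine List.isChain_cons_cons.2 ⟨hR.1, ?_⟩
      rw [hss']
      exact hrest

theorem exists_pathNodes_eq_cons (ha : startsAt p a) : ∃ l, pathNodes p = a :: l :=
  ⟨_, (List.cons_head?_tail ha).symm⟩

theorem reflTransGen_of_isChain_pathNodes {R : V → V → Prop} (hp : (pathNodes p).IsChain R)
    (ha : startsAt p a) (hb : endsAt p b) : ReflTransGen R a b := by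
  obtain ⟨l, hl⟩ := exists_pathNodes_eq_cons ha
  rw [endsAt, hl] at hb
  rw [hl] at hp
  exact List.relationReflTransGen_of_exists_isChain_cons l hp
    (List.getLast_of_getLast?_eq_some hb)

theorem IsPath.dir_of_kind_eq_fwd (hp : IsPath G p) (hs : s ∈ p) (hk : s.kind = .fwd) :
    G.dir s.src s.dst := by
  simpa only [stepOK, hk] using hp.valid s hs

theorem possEdge_of_stepOK (hG : IsPDAG G) (hs : stepOK G s)
    (hk : s.kind = .fwd ∨ s.kind = .und) : PossEdge G s.src s.dst := by
  rcases hk with hk | hk <;> simp only [stepOK, hk] at hs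
  exacts [.inl hs, .inr (hs.elim id (hG.undir_symm _ _))]

theorem IsPath.isPossDirected_pathNodes (hG : IsPDAG G) (hp : IsPath G p)
    (hpd : possiblyDirected G p) : IsPossDirected G (pathNodes p) where
  isChain := isChain_pathNodes hp.chain fun s hs =>
    possEdge_of_stepOK hG (hp.valid s hs) (hpd.1 s hs)
  pairwise := List.Pairwise.and hp.nodup hpd.2

end PathsToNodeLists

section Descendants

theorem exists_isChain_nodup_of_reflTransGen {R : V → V → Prop} (h : ReflTransGen R a b) :
    ∃ l, (a :: l).IsChain R ∧ (a :: l).getLast? = some b ∧ (a :: l).Nodup := by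
  induction h using ReflTransGen.head_induction_on with
  | refl => exact ⟨[], by simp⟩
  | @head a c hac _ ih =>
    obtain ⟨l, hchain, hlast, hnd⟩ := ih
    by_cases ha : a ∈ c :: l
    · obtain ⟨l₁, l₂, hl⟩ := List.append_of_mem ha
      rw [hl] at hchain hlast hnd
      rw [List.getLast?_append_of_ne_nil _ (List.cons_ne_nil a l₂)] at hlast
      exact ⟨l₂, hchain.right_of_append, hlast, (List.nodup_append.1 hnd).2.1⟩
    · exact ⟨c :: l, List.isChain_cons_cons.2 ⟨hac, hchain⟩,
        by rwa [List.getLast?_cons_cons], List.nodup_cons.2 ⟨ha, hnd⟩⟩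

theorem exists_directedPathFromTo_of_reflTransGen (h : ReflTransGen G.dir a b) (hab : a ≠ b) :
    ∃ p, directedPathFromTo G p a b := by
  obtain ⟨_ | ⟨c, l⟩, hchain, hlast, hnd⟩ := exists_isChain_nodup_of_reflTransGen h
  · exact absurd (Option.some.inj hlast) hab
  · exact ⟨stepsOfNodes G (a :: c :: l), isPath_stepsOfNodes (hchain.imp fun _ _ => .inl) hnd,
      allFwd_stepsOfNodes hchain, rfl, by rwa [endsAt, pathNodes_stepsOfNodes]⟩

theorem reflTransGen_of_directedPathFromTo (h : directedPathFromTo G p a b) :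
    ReflTransGen G.dir a b := by
  obtain ⟨hp, hfwd, ha, hb⟩ := h
  exact reflTransGen_of_isChain_pathNodes
    (isChain_pathNodes hp.chain fun s hs => hp.dir_of_kind_eq_fwd hs (hfwd s hs)) ha hb

theorem descendant_iff_reflTransGen : descendant G a b ↔ ReflTransGen G.dir a b := by
  constructor
  · rintro (rfl | ⟨p, hp⟩)
    exacts [.refl, reflTransGen_of_directedPathFromTo hp]
  · intro h
    by_cases hab : a = b
    exacts [.inl hab, .inr (exists_directedPathFromTo_of_reflTransGen h hab)]

theorem mem_deSet_iff : v ∈ deSet G A ↔ ∃ a ∈ A, ReflTransGen G.dir a v := by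
  simp only [deSet, Set.mem_ofPred_eq, descendant_iff_reflTransGen]

theorem subset_deSet (G : MixedGraph V) (A : Set V) : A ⊆ deSet G A := fun a ha => ⟨a, ha, .inl rfl⟩

theorem not_ancestorOfSome_of_mem_deSet (hv : v ∈ deSet G A) (hC : Disjoint (deSet G A) C) :
    ¬ ancestorOfSome G v C := by
  rintro ⟨c, hc, hvc⟩
  obtain ⟨a, ha, hav⟩ := mem_deSet_iff.1 hv
  exact hC.notMem_of_mem_left
    (mem_deSet_iff.2 ⟨a, ha, hav.trans (descendant_iff_reflTransGen.1 hvc)⟩) hc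

theorem IsPDAG.not_transGen_self (hG : IsPDAG G) (a : V) : ¬ TransGen G.dir a a := fun h => by
  obtain ⟨b, hab, hba⟩ := TransGen.tail'_iff.1 h
  by_cases heq : a = b
  · exact hG.dir_irrefl a (heq ▸ hba)
  · exact hG.acyclic a b (exists_directedPathFromTo_of_reflTransGen hab heq) hba

theorem IsPDAG.isPossDirected_of_isChain_dir (hG : IsPDAG G) (hl : l.IsChain G.dir) :
    IsPossDirected G l where
  isChain := hl.imp fun _ _ => .inl
  pairwise := by
    have htrans : l.Pairwise (TransGen G.dir) :=
      List.isChain_iff_pairwise.1 (hl.imp fun _ _ => .single)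
    refine htrans.imp fun {a b} hab => ⟨?_, fun hba => hG.not_transGen_self a (hab.tail hba)⟩
    rintro rfl
    exact hG.not_transGen_self a hab

theorem possDescendant_of_isPossDirected (h : IsPossDirected G (a :: l))
    (hb : (a :: l).getLast? = some b) : possDescendant G a b := by
  cases l with
  | nil => exact .inl (Option.some.inj hb)
  | cons c l =>
    exact .inr ⟨stepsOfNodes G (a :: c :: l), isPath_stepsOfNodes h.isChain h.nodup,
      possiblyDirected_stepsOfNodes h, rfl, by rwa [endsAt, pathNodes_stepsOfNodes]⟩

theorem IsPDAG.possDescendant_of_descendant (hG : IsPDAG G) (h : descendant G a b) :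
    possDescendant G a b := by
  obtain ⟨l, hchain, hlast, -⟩ :=
    exists_isChain_nodup_of_reflTransGen (descendant_iff_reflTransGen.1 h)
  exact possDescendant_of_isPossDirected (hG.isPossDirected_of_isChain_dir hchain) hlast

theorem IsPDAG.deSet_subset_possdeSet (hG : IsPDAG G) : deSet G A ⊆ possdeSet G A :=
  fun _ ⟨a, ha, hav⟩ => ⟨a, ha, hG.possDescendant_of_descendant hav⟩

theorem IsPDAG.reflTransGen_possEdge_of_possDescendant (hG : IsPDAG G)
    (h : possDescendant G a b) : ReflTransGen (PossEdge G) a b := by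
  rcases h with rfl | ⟨p, hp, hpd, ha, hb⟩
  exacts [.refl,
    reflTransGen_of_isChain_pathNodes (hp.isPossDirected_pathNodes hG hpd).isChain ha hb]

theorem IsPDAG.possdeSet_eq_deSet (hG : IsPDAG G)
    (hA : ∀ v w, v ∈ deSet G A → PossEdge G v w → w ∈ deSet G A) :
    possdeSet G A = deSet G A := by
  refine Set.Subset.antisymm ?_ hG.deSet_subset_possdeSet
  rintro v ⟨a, ha, hav⟩
  replace hav := hG.reflTransGen_possEdge_of_possDescendant hav
  induction hav with
  | refl => exact subset_deSet G A ha
  | tail _ hbc ih => exact hA _ _ ih hbc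

end Descendants

section MeekRules

/-- A PDAG closed under Meek's rules R1, R2 and R4: a maxPDAG, except that R3 may fail. -/
structure IsWeakMaxPDAG (G : MixedGraph V) : Prop extends IsPDAG G where
  meek1 : ∀ a b c, G.dir a b → G.undir b c → ¬ adjacent G a c → G.dir b c
  meek2 : ∀ a b c, G.dir a b → G.dir b c → G.undir a c → G.dir a c
  meek4 : ∀ a b c d, G.undir a b → G.dir a c → G.undir b c → G.dir c d → G.undir b d → G.dir b d

theorem IsMaxPDAG.isWeakMaxPDAG (hG : IsMaxPDAG G) : IsWeakMaxPDAG G where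
  toIsPDAG := hG.toIsPDAG
  meek1 := hG.meek1
  meek2 := hG.meek2
  meek4 := hG.meek4

namespace IsWeakMaxPDAG

theorem possEdge_of_dir_of_undir (hG : IsWeakMaxPDAG G) (hab : G.dir a b) (hbc : G.undir b c) :
    PossEdge G a c := by
  by_cases hadj : adjacent G a c
  · rcases hadj with h | h | h | h | h | h
    · exact .inl h
    · exact absurd (hG.undir_symm _ _ hbc)
        (hG.simple_du _ _ (hG.meek2 c a b h hab (hG.undir_symm _ _ hbc)))
    · exact .inr h
    · exact .inr (hG.undir_symm _ _ h)
    · exact absurd h (hG.no_bidir _ _)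
    · exact absurd h (hG.no_bidir _ _)
  · exact absurd hbc (hG.simple_du _ _ (hG.meek1 a b c hab hbc hadj))

theorem transGen_or_undir (hG : IsWeakMaxPDAG G) (hab : ReflTransGen G.dir a b)
    (hbc : G.undir b c) : TransGen G.dir a c ∨ G.undir a c := by
  induction hab using ReflTransGen.head_induction_on with
  | refl => exact .inr hbc
  | head h _ ih =>
    rcases ih with ih | ih
    · exact .inl (ih.head h)
    · exact (hG.possEdge_of_dir_of_undir h ih).imp_left .single

/-- If not, `transGen_or_undir` makes `c` an undirected neighbour of the first three nodes of the
directed path from `a` to `b`, and R4 orients one of these edges. -/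
theorem transGen_of_transGen_of_undir (hG : IsWeakMaxPDAG G) (hab : TransGen G.dir a b)
    (hndir : ¬ G.dir a b) (hbc : G.undir b c) : TransGen G.dir a c := by
  obtain ⟨a₁, ha₁, ha₁b⟩ := TransGen.head'_iff.1 hab
  obtain rfl | ⟨a₂, ha₂, ha₂b⟩ := ha₁b.cases_head
  · exact absurd ha₁ hndir
  obtain h | hac := hG.transGen_or_undir hab.to_reflTransGen hbc
  · exact h
  obtain h | ha₁c := hG.transGen_or_undir ha₁b hbc
  · exact h.head ha₁
  obtain h | ha₂c := hG.transGen_or_undir ha₂b hbc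
  · exact (h.head ha₂).head ha₁
  have hca₂ := hG.undir_symm _ _ ha₂c
  exact absurd hca₂ <| hG.simple_du _ _ <|
    hG.meek4 a c a₁ a₂ hac ha₁ (hG.undir_symm _ _ ha₁c) ha₂ hca₂

theorem not_transGen_of_isPossDirected (hG : IsWeakMaxPDAG G) (hl : IsPossDirected G (a :: l))
    (hv : v ∈ a :: l) : ¬ TransGen G.dir v a := by
  intro hva
  induction l generalizing a with
  | nil => exact hG.not_transGen_self a (List.mem_singleton.1 hv ▸ hva)
  | cons b l ih =>
    obtain ⟨hab, hback, hl⟩ := isPossDirected_cons_cons.1 hl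
    rcases List.mem_cons.1 hv with rfl | hv
    · exact hG.not_transGen_self v hva
    rcases hab with hab | hab
    · exact ih hl hv (hva.tail hab)
    · exact ih hl hv (hG.transGen_of_transGen_of_undir hva (hback v hv).2 hab)

theorem isPossDirected_cons_of_dir (hG : IsWeakMaxPDAG G) (hab : G.dir a b)
    (hl : IsPossDirected G (b :: l)) : IsPossDirected G (a :: b :: l) := by
  refine isPossDirected_cons_cons.2 ⟨.inl hab, fun v hv => ⟨?_, fun hva => ?_⟩, hl⟩
  · rintro rfl
    exact hG.not_transGen_of_isPossDirected hl hv (.single hab)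
  · exact hG.not_transGen_of_isPossDirected hl hv (.tail (.single hva) hab)

end IsWeakMaxPDAG

end MeekRules

section CausalNodes

theorem exists_append_cons_forall_notMem (ha : a ∈ l) (haX : a ∈ X) :
    ∃ l₁, ∃ t ∈ X, ∃ l₂, l = l₁ ++ t :: l₂ ∧ ∀ v ∈ l₂, v ∉ X := by
  induction l generalizing a with
  | nil => exact absurd ha List.not_mem_nil
  | cons b l ih =>
    by_cases h : ∃ c ∈ l, c ∈ X
    · obtain ⟨c, hc, hcX⟩ := h
      obtain ⟨l₁, t, ht, l₂, rfl, hl₂⟩ := ih hc hcX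
      exact ⟨b :: l₁, t, ht, l₂, rfl, hl₂⟩
    · push Not at h
      rcases List.mem_cons.1 ha with rfl | ha
      exacts [⟨[], a, haX, l, rfl, h⟩, absurd haX (h a ha)]

theorem mem_posscn_of_isPossDirected (ht : t ∈ X) (htail : IsPossTail G X Y l)
    (h : IsPossDirected G (t :: l)) (hv : v ∈ l) : v ∈ posscn G X Y := by
  obtain ⟨b, l, rfl⟩ := List.exists_cons_of_ne_nil (List.ne_nil_of_mem hv)
  refine ⟨htail.notMem v hv, _, properFromTo_stepsOfNodes ht htail h,
    possiblyDirected_stepsOfNodes h, ?_⟩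
  rw [pathNodes_stepsOfNodes]
  exact List.mem_cons_of_mem t hv

theorem mem_cn_of_isPossDirected (ht : t ∈ X) (htail : IsPossTail G X Y l)
    (h : IsPossDirected G (t :: l)) (hchain : (t :: l).IsChain G.dir) (hv : v ∈ l) :
    v ∈ cn G X Y := by
  obtain ⟨b, l, rfl⟩ := List.exists_cons_of_ne_nil (List.ne_nil_of_mem hv)
  refine ⟨htail.notMem v hv, _, properFromTo_stepsOfNodes ht htail h,
    allFwd_stepsOfNodes hchain, ?_⟩
  rw [pathNodes_stepsOfNodes]
  exact List.mem_cons_of_mem t hv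

theorem IsPDAG.exists_isPossDirected_of_mem_posscn (hG : IsPDAG G) (hv : v ∈ posscn G X Y) :
    ∃ t ∈ X, ∃ l, v ∈ l ∧ IsPossTail G X Y l ∧ IsPossDirected G (t :: l) := by
  obtain ⟨hvX, p, ⟨hp, ⟨t, ht, hpt⟩, ⟨y, hy, hpy⟩, hX⟩, hpd, hvp⟩ := hv
  have hpath := hp.isPossDirected_pathNodes hG hpd
  obtain ⟨l, hl⟩ := exists_pathNodes_eq_cons hpt
  rw [endsAt, hl] at hpy
  rw [hl] at hX hvp hpath
  have hvl : v ∈ l := (List.mem_cons.1 hvp).resolve_left fun h => hvX (h ▸ ht)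
  refine ⟨t, ht, l, hvl, ⟨hpath.right_of_append (l₁ := [t]), hX, y, hy, ?_⟩, hpath⟩
  rwa [← List.singleton_append, List.getLast?_append_of_ne_nil _ (List.ne_nil_of_mem hvl)] at hpy

theorem IsPDAG.mem_posscn_of_mem_possdeSet (hG : IsPDAG G) (hvY : v ∈ Y) (hvX : v ∉ X)
    (hv : v ∈ possdeSet G X) : v ∈ posscn G X Y := by
  obtain ⟨a, ha, rfl | ⟨p, hp, hpd, hpa, hpv⟩⟩ := hv
  · exact absurd ha hvX
  have hpath := hp.isPossDirected_pathNodes hG hpd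
  obtain ⟨l₁, t, ht, l₂, hl, hl₂⟩ :=
    exists_append_cons_forall_notMem (List.mem_of_head? hpa) ha
  rw [hl] at hpath
  rw [endsAt, hl, List.getLast?_append_of_ne_nil _ (List.cons_ne_nil t l₂)] at hpv
  cases l₂ with
  | nil => exact absurd (Option.some.inj hpv ▸ ht) hvX
  | cons b l₂ =>
    rw [List.getLast?_cons_cons] at hpv
    have htl := hpath.right_of_append
    exact mem_posscn_of_isPossDirected ht ⟨htl.right_of_append (l₁ := [t]), hl₂, v, hvY, hpv⟩ htl
      (List.mem_of_getLast? hpv)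

theorem amenable.dir_of_possEdge (ha : amenable G X Y) (ht : t ∈ X) (htw : PossEdge G t w)
    (hl : IsPossTail G X Y (w :: l)) (hdir : ∀ v ∈ w :: l, ¬ G.dir v t) : G.dir t w := by
  have h := hl.isPossDirected_cons ht htw hdir
  obtain ⟨s, p, hsp, hfwd⟩ :=
    ha _ (properFromTo_stepsOfNodes ht hl h) (possiblyDirected_stepsOfNodes h)
  obtain ⟨rfl, -⟩ := List.cons.inj hsp
  by_contra hndir
  simp [Step.kind, hndir] at hfwd

theorem amenable.not_undir (ha : amenable G X Y) (hG : IsPDAG G) (ht : t ∈ X)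
    (hl : IsPossTail G X Y (w :: l)) (hdir : ∀ v ∈ w :: l, ¬ G.dir v t) : ¬ G.undir t w :=
  fun htw => hG.simple_du _ _ (ha.dir_of_possEdge ht (.inr htw) hl hdir) htw

namespace IsWeakMaxPDAG

theorem exists_isPossTail_append_of_transGen (hG : IsWeakMaxPDAG G) (ht : t ∈ X)
    (htw : TransGen G.dir t w) (hl : IsPossTail G X Y (w :: l)) :
    ∃ t' ∈ X, ∃ l', IsPossTail G X Y (l' ++ w :: l) ∧ IsPossDirected G (t' :: (l' ++ w :: l)) ∧
      (t' :: (l' ++ [w])).IsChain G.dir := by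
  induction htw generalizing l with
  | single htw =>
    exact ⟨t, ht, [], hl, hG.isPossDirected_cons_of_dir htw hl.isPossDirected,
      List.isChain_pair.2 htw⟩
  | @tail b w _ hbw ih =>
    have hpath := hG.isPossDirected_cons_of_dir hbw hl.isPossDirected
    by_cases hb : b ∈ X
    · exact ⟨b, hb, [], hl, hpath, List.isChain_pair.2 hbw⟩
    obtain ⟨t', ht', l', htail', hpath', hchain⟩ := ih (hl.cons hb hpath)
    refine ⟨t', ht', l' ++ [b], by simpa using htail', by simpa using hpath', ?_⟩
    rw [List.append_assoc, ← List.cons_append]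
    exact List.isChain_split.2 ⟨hchain, List.isChain_pair.2 hbw⟩

theorem mem_posscn_of_transGen (hG : IsWeakMaxPDAG G) (ht : t ∈ X) (htw : TransGen G.dir t w)
    (hl : IsPossTail G X Y (w :: l)) (hv : v ∈ w :: l) : v ∈ posscn G X Y := by
  obtain ⟨t', ht', l', htail, hpath, -⟩ := hG.exists_isPossTail_append_of_transGen ht htw hl
  exact mem_posscn_of_isPossDirected ht' htail hpath (List.mem_append_right l' hv)

theorem mem_cn_of_transGen (hG : IsWeakMaxPDAG G) (ht : t ∈ X) (htw : TransGen G.dir t w)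
    (hl : IsPossTail G X Y (w :: l)) (hchain : (w :: l).IsChain G.dir) : w ∈ cn G X Y := by
  obtain ⟨t', ht', l', htail, hpath, hchain'⟩ := hG.exists_isPossTail_append_of_transGen ht htw hl
  have hall : (t' :: l' ++ w :: l).IsChain G.dir := List.isChain_split.2 ⟨hchain', hchain⟩
  exact mem_cn_of_isPossDirected ht' htail hpath hall (List.mem_append_right l' List.mem_cons_self)

theorem transGen_of_mem_isPossTail (hG : IsWeakMaxPDAG G) (ha : amenable G X Y) (ht : t ∈ X)
    (htw : TransGen G.dir t w) (hl : IsPossTail G X Y (w :: l)) :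
    ∀ v ∈ w :: l, TransGen G.dir t v := by
  induction l generalizing w with
  | nil => simpa using htw
  | cons b l ih =>
    obtain ⟨hwb, -, -⟩ := isPossDirected_cons_cons.1 hl.isPossDirected
    suffices htb : TransGen G.dir t b from List.forall_mem_cons.2 ⟨htw, ih htb hl.tail⟩
    rcases hwb with hwb | hwb
    · exact htw.tail hwb
    have hdir : ∀ v ∈ b :: l, ¬ G.dir v t := fun v hv hvt =>
      hG.not_transGen_of_isPossDirected hl.isPossDirected (List.mem_cons_of_mem w hv)
        (htw.head hvt)
    exact (hG.transGen_or_undir htw.to_reflTransGen hwb).resolve_right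
      (ha.not_undir hG.toIsPDAG ht hl.tail hdir)

theorem exists_isPossTail_of_mem_posscn (hG : IsWeakMaxPDAG G) (ha : amenable G X Y)
    (hv : v ∈ posscn G X Y) :
    ∃ t ∈ X, ∃ l, IsPossTail G X Y (v :: l) ∧ ∀ w ∈ v :: l, TransGen G.dir t w := by
  obtain ⟨t, ht, l, hvl, htail, hpath⟩ := hG.exists_isPossDirected_of_mem_posscn hv
  obtain ⟨b, l, rfl⟩ := List.exists_cons_of_ne_nil (List.ne_nil_of_mem hvl)
  obtain ⟨htb, hback, -⟩ := isPossDirected_cons_cons.1 hpath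
  have hdir := ha.dir_of_possEdge ht htb htail fun v hv => (hback v hv).2
  have hreach := hG.transGen_of_mem_isPossTail ha ht (.single hdir) htail
  obtain ⟨l₁, l₂, hl⟩ := List.append_of_mem hvl
  rw [hl] at htail hreach
  exact ⟨t, ht, l₂, htail.right_of_append, fun w hw => hreach w (List.mem_append_right l₁ hw)⟩

theorem exists_transGen_of_mem_deSet_posscn (hG : IsWeakMaxPDAG G) (ha : amenable G X Y)
    (hv : v ∈ deSet G (posscn G X Y)) : ∃ t ∈ X, TransGen G.dir t v := by
  obtain ⟨q, hq, hqv⟩ := mem_deSet_iff.1 hv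
  obtain ⟨t, ht, l, -, hreach⟩ := hG.exists_isPossTail_of_mem_posscn ha hq
  exact ⟨t, ht, (hreach q List.mem_cons_self).trans_left hqv⟩

theorem mem_deSet_posscn_of_undir (hG : IsWeakMaxPDAG G) (ha : amenable G X Y)
    (hv : v ∈ posscn G X Y) (hvw : G.undir v w) : w ∈ deSet G (posscn G X Y) := by
  obtain ⟨t, ht, l, htail, hreach⟩ := hG.exists_isPossTail_of_mem_posscn ha hv
  have htv := hreach v List.mem_cons_self
  by_cases hdir : ∃ e ∈ v :: l, G.dir e w
  · obtain ⟨e, he, hew⟩ := hdir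
    exact mem_deSet_iff.2 ⟨e, hG.mem_posscn_of_transGen ht htv htail he, .single hew⟩
  by_cases hwl : w ∈ v :: l
  · exact subset_deSet G _ (hG.mem_posscn_of_transGen ht htv htail hwl)
  push Not at hdir
  have hwv := hG.undir_symm _ _ hvw
  by_cases hwX : w ∈ X
  · exact absurd hwv (ha.not_undir hG.toIsPDAG hwX htail hdir)
  have hpath : IsPossDirected G (w :: v :: l) := isPossDirected_cons_cons.2
    ⟨.inr hwv, fun e he => ⟨fun hwe => hwl (hwe ▸ he), hdir e he⟩, htail.isPossDirected⟩
  have hwtail : IsPossTail G X Y (w :: v :: l) := htail.cons hwX hpath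
  rcases hG.transGen_or_undir htv.to_reflTransGen hvw with htw | htw
  · exact subset_deSet G _ (hG.mem_posscn_of_transGen ht htw hwtail List.mem_cons_self)
  · refine absurd htw (ha.not_undir hG.toIsPDAG ht hwtail ?_)
    refine List.forall_mem_cons.2 ⟨fun hwt => hG.simple_du _ _ hwt (hG.undir_symm _ _ htw), ?_⟩
    exact fun e he het => hG.not_transGen_self t ((hreach e he).tail het)

theorem mem_deSet_posscn_of_possEdge (hG : IsWeakMaxPDAG G) (ha : amenable G X Y)
    (hv : v ∈ deSet G (posscn G X Y)) (hvw : PossEdge G v w) : w ∈ deSet G (posscn G X Y) := by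
  obtain ⟨q, hq, hqv⟩ := mem_deSet_iff.1 hv
  rcases hvw with hvw | hvw
  · exact mem_deSet_iff.2 ⟨q, hq, hqv.tail hvw⟩
  rcases hG.transGen_or_undir hqv hvw with hqw | hqw
  · exact mem_deSet_iff.2 ⟨q, hq, hqw.to_reflTransGen⟩
  · exact hG.mem_deSet_posscn_of_undir ha hq hqw

theorem forbP_eq (hG : IsWeakMaxPDAG G) (ha : amenable G X Y) :
    forbP G X Y = deSet G (posscn G X Y) ∪ X := by
  rw [forbP, hG.possdeSet_eq_deSet fun _ _ => hG.mem_deSet_posscn_of_possEdge ha]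

end IsWeakMaxPDAG

end CausalNodes

section Blocking

theorem stepPairs_subset_of_suffix (h : q <:+ p) : stepPairs q ⊆ stepPairs p := by
  obtain ⟨r, rfl⟩ := h
  induction r with
  | nil => exact List.Subset.refl _
  | cons s r ih =>
    refine List.Subset.trans ih ?_
    cases h : r ++ q with
    | nil => exact List.nil_subset _
    | cons s' m => simp [stepPairs, h]

theorem mem_stepPairs_of_suffix (h : s :: s' :: q <:+ p) : (s, s') ∈ stepPairs p :=
  stepPairs_subset_of_suffix h List.mem_cons_self

theorem definiteStatus.of_suffix (hp : definiteStatus G p) (h : q <:+ p) : definiteStatus G q :=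
  fun r hr => hp r (stepPairs_subset_of_suffix h hr)

theorem colliderAt.of_suffix (hv : colliderAt q v) (h : q <:+ p) : colliderAt p v :=
  let ⟨r, hr, hrv⟩ := hv
  ⟨r, stepPairs_subset_of_suffix h hr, hrv⟩

theorem colliderAt.exists_dst_eq (hv : colliderAt p v) : ∃ s ∈ p, s.dst = v :=
  let ⟨r, hr, hrv, _⟩ := hv
  ⟨r.1, (List.of_mem_zip hr).1, hrv⟩

theorem defNonColliderAt.exists_dst_eq (hv : defNonColliderAt G p v) : ∃ s ∈ p, s.dst = v :=
  let ⟨r, hr, hrv, _⟩ := hv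
  ⟨r.1, (List.of_mem_zip hr).1, hrv⟩

theorem colliderAt.blockedDef (hv : colliderAt p v) (hvA : v ∈ deSet G A)
    (hC : Disjoint (deSet G A) C) : blockedDef G p C :=
  .inr ⟨v, hv, not_ancestorOfSome_of_mem_deSet hvA hC⟩

theorem blockedDef_iff_exists_colliderAt (hp : ∀ s ∈ p, s.dst ∈ deSet G A)
    (hC : Disjoint (deSet G A) C) : blockedDef G p C ↔ ∃ v, colliderAt p v := by
  constructor
  · rintro (⟨v, hvC, hv⟩ | ⟨v, hv, -⟩)
    · obtain ⟨s, hs, rfl⟩ := hv.exists_dst_eq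
      exact absurd hvC (hC.notMem_of_mem_left (hp s hs))
    · exact ⟨v, hv⟩
  · rintro ⟨v, hv⟩
    obtain ⟨s, hs, rfl⟩ := hv.exists_dst_eq
    exact hv.blockedDef (hp s hs) hC

theorem definiteStatus.allFwd (hp : definiteStatus G (s :: p)) (hs : s.kind = .fwd)
    (hcol : ∀ v, ¬ colliderAt (s :: p) v) : allFwd (s :: p) := by
  induction p generalizing s with
  | nil => exact List.forall_mem_singleton.2 hs
  | cons s' p ih =>
    have hsuff : s' :: p <:+ s :: s' :: p := List.suffix_cons s _
    have hs' : s'.kind = .fwd := by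
      rcases hp (s, s') List.mem_cons_self with h | h | h | ⟨h, -⟩
      · exact absurd ⟨(s, s'), List.mem_cons_self, rfl, h⟩ (hcol s.dst)
      · exact absurd (hs.symm.trans h) EdgeKind.noConfusion
      · exact h
      · exact absurd (hs.symm.trans h) EdgeKind.noConfusion
    exact List.forall_mem_cons.2
      ⟨hs, ih (hp.of_suffix hsuff) hs' fun v hv => hcol v (hv.of_suffix hsuff)⟩

end Blocking

section ProperPaths

theorem IsPath.dst_eq_src_of_suffix (hp : IsPath G p) (hq : s :: s' :: q <:+ p) :
    s.dst = s'.src :=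
  (List.isChain_cons_cons.1 (hp.chain.suffix hq)).1

theorem IsPath.isChain_map_dst_of_suffix (hp : IsPath G p) (hq : q <:+ p) (hfwd : allFwd q) :
    (q.map Step.dst).IsChain G.dir := by
  have hchain : (pathNodes q).IsChain G.dir := isChain_pathNodes (hp.chain.suffix hq)
    fun r hr => hp.dir_of_kind_eq_fwd (hq.subset hr) (hfwd r hr)
  cases q with
  | nil => exact .nil
  | cons s q => exact hchain.tail

theorem properFromTo.dst_notMem (hp : properFromTo G p X Y) (hs : s ∈ p) : s.dst ∉ X := by
  obtain ⟨-, -, -, hX⟩ := hp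
  cases p with
  | nil => exact absurd hs List.not_mem_nil
  | cons s' p => exact hX _ (List.mem_map_of_mem hs)

theorem properFromTo.getLast_mem_of_suffix (hp : properFromTo G p X Y) (hq : s :: q <:+ p) :
    ∃ y ∈ Y, ((s :: q).map Step.dst).getLast? = some y := by
  obtain ⟨-, -, ⟨y, hy, hpy⟩, -⟩ := hp
  obtain ⟨r, rfl⟩ := hq
  obtain ⟨l, hl⟩ : ∃ l, pathNodes (r ++ s :: q) = l ++ (s :: q).map Step.dst := by
    cases r with
    | nil => exact ⟨[s.src], rfl⟩
    | cons s' r => exact ⟨pathNodes (s' :: r), by simp [pathNodes]⟩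
  rw [endsAt, hl, List.getLast?_append_of_ne_nil _ (by simp)] at hpy
  exact ⟨y, hy, hpy⟩

theorem properFromTo.isPossTail_of_suffix (hp : properFromTo G p X Y) (hG : IsPDAG G)
    (hq : s :: q <:+ p) (hfwd : allFwd (s :: q)) :
    IsPossTail G X Y ((s :: q).map Step.dst) where
  isPossDirected := hG.isPossDirected_of_isChain_dir (hp.1.isChain_map_dst_of_suffix hq hfwd)
  notMem := List.forall_mem_map.2 fun _ hr => hp.dst_notMem (hq.subset hr)
  getLast_mem := hp.getLast_mem_of_suffix hq

end ProperPaths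

section OSet

theorem IsPDAG.disjoint_deSet_posscn {Z : Set V} (hG : IsPDAG G) (hZ : Z ∩ forbP G X Y = ∅) :
    Disjoint (deSet G (posscn G X Y)) Z :=
  ((Set.disjoint_iff_inter_eq_empty.2 hZ).mono_right
    (hG.deSet_subset_possdeSet.trans Set.subset_union_left)).symm

theorem OsetP_inter_forbP : OsetP G X Y ∩ forbP G X Y = ∅ := Set.sdiff_inter_self

theorem IsPDAG.OsetP_inter_union (hG : IsPDAG G) (hposs : Y ⊆ possdeSet G X) :
    OsetP G X Y ∩ (X ∪ Y) = ∅ := by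
  rw [← Set.disjoint_iff_inter_eq_empty, Set.disjoint_left]
  rintro v ⟨-, hv⟩ (hvX | hvY)
  · exact hv (.inr hvX)
  · exact hv (.inl ⟨v, hG.mem_posscn_of_mem_possdeSet hvY (fun h => hv (.inr h)) (hposs hvY),
      .inl rfl⟩)

theorem dst_mem_cn_of_suffix (hG : IsWeakMaxPDAG G) (ha : amenable G X Y)
    (hp : properFromTo G p X Y) (hq : s :: q <:+ p) (hfwd : allFwd (s :: q))
    (hs : s.dst ∈ deSet G (posscn G X Y)) : s.dst ∈ cn G X Y := by
  obtain ⟨t, ht, hts⟩ := hG.exists_transGen_of_mem_deSet_posscn ha hs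
  exact hG.mem_cn_of_transGen ht hts (hp.isPossTail_of_suffix hG.toIsPDAG hq hfwd)
    (hp.1.isChain_map_dst_of_suffix hq hfwd)

theorem IsPDAG.not_colliderAt_of_suffix (hG : IsPDAG G)
    (hunblocked : ¬ blockedDef G p (OsetP G X Y)) (hq : q <:+ p)
    (hmem : ∀ r ∈ q, r.dst ∈ deSet G (posscn G X Y)) (v : V) : ¬ colliderAt q v := by
  intro hv
  obtain ⟨r, hr, rfl⟩ := hv.exists_dst_eq
  exact hunblocked ((hv.of_suffix hq).blockedDef (hmem r hr)
    (hG.disjoint_deSet_posscn OsetP_inter_forbP))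

theorem dst_mem_deSet_posscn_of_suffix (hG : IsWeakMaxPDAG G) (ha : amenable G X Y)
    (hp : properFromTo G p X Y) (hstatus : definiteStatus G p)
    (hunblocked : ¬ blockedDef G p (OsetP G X Y)) (hq : s :: s' :: q <:+ p)
    (hmem : ∀ r ∈ s' :: q, r.dst ∈ deSet G (posscn G X Y)) :
    s.dst ∈ deSet G (posscn G X Y) := by
  have hq' : s' :: q <:+ p := (List.suffix_cons s _).trans hq
  have hs' : s' ∈ p := hq'.subset List.mem_cons_self
  have hedge := hp.1.valid s' hs'
  have hF := hmem s' List.mem_cons_self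
  have hstep := hp.1.dst_eq_src_of_suffix hq
  cases hk : s'.kind <;> simp only [stepOK, hk, ← hstep] at hedge
  case bwd => exact hG.mem_deSet_posscn_of_possEdge ha hF (.inl hedge)
  case und =>
    exact hG.mem_deSet_posscn_of_possEdge ha hF (.inr (hedge.elim (hG.undir_symm _ _) id))
  case bid => exact absurd hedge (by simp only [hG.no_bidir, or_self, not_false_eq_true])
  case fwd =>
    have hfwd : allFwd (s' :: q) :=
      (hstatus.of_suffix hq').allFwd hk (hG.not_colliderAt_of_suffix hunblocked hq' hmem)
    have hpa : s.dst ∈ paSet G (cn G X Y) := ⟨_, dst_mem_cn_of_suffix hG ha hp hq' hfwd hF, hedge⟩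
    have hforb : s.dst ∈ forbP G X Y := by
      by_contra hforb
      exact hunblocked (.inl ⟨s.dst, ⟨hpa, hforb⟩, (s, s'), mem_stepPairs_of_suffix hq, rfl,
        .inr (.inl hk)⟩)
    rw [hG.forbP_eq ha] at hforb
    exact hforb.resolve_right (hp.dst_notMem (hq.subset List.mem_cons_self))

theorem dst_mem_deSet_posscn (hG : IsWeakMaxPDAG G) (ha : amenable G X Y)
    (hposs : Y ⊆ possdeSet G X) (hp : properFromTo G p X Y) (hstatus : definiteStatus G p)
    (hunblocked : ¬ blockedDef G p (OsetP G X Y)) :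
    ∀ s ∈ p, s.dst ∈ deSet G (posscn G X Y) := by
  suffices h : ∀ q, q <:+ p → ∀ s ∈ q, s.dst ∈ deSet G (posscn G X Y) from h p List.suffix_rfl
  intro q hq
  induction q with
  | nil => exact List.forall_mem_nil _
  | cons s q ih =>
    have hmem := ih ((List.suffix_cons s q).trans hq)
    refine List.forall_mem_cons.2 ⟨?_, hmem⟩
    cases q with
    | nil =>
      obtain ⟨y, hy, hsy⟩ := hp.getLast_mem_of_suffix hq
      obtain rfl : s.dst = y := Option.some.inj hsy
      exact subset_deSet G _ (hG.mem_posscn_of_mem_possdeSet hy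
        (hp.dst_notMem (hq.subset List.mem_cons_self)) (hposs hy))
    | cons s' q => exact dst_mem_deSet_posscn_of_suffix hG ha hp hstatus hunblocked hq hmem

theorem blockedDef_OsetP_of_blockedDef {Z : Set V} (hG : IsWeakMaxPDAG G) (ha : amenable G X Y)
    (hposs : Y ⊆ possdeSet G X) (hp : properFromTo G p X Y) (hstatus : definiteStatus G p)
    (hZ : Z ∩ forbP G X Y = ∅) (hblocked : blockedDef G p Z) :
    blockedDef G p (OsetP G X Y) := by
  by_contra hunblocked
  have hmem := dst_mem_deSet_posscn hG ha hposs hp hstatus hunblocked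
  have hcol := (blockedDef_iff_exists_colliderAt hmem (hG.disjoint_deSet_posscn hZ)).1 hblocked
  exact hunblocked
    ((blockedDef_iff_exists_colliderAt hmem (hG.disjoint_deSet_posscn OsetP_inter_forbP)).2 hcol)

end OSet

end Causal

open Causal in
theorem o_set_is_valid_adjustment_set_general
    {V : Type*} (G : MixedGraph V) (X Y : Set V) (hG : IsWeakMaxPDAG G)
    (hposs : Y ⊆ possdeSet G X) (hexists : ∃ Z, validAdjMax G X Y Z) :
    validAdjMax G X Y (paSet G (cn G X Y) \ forbP G X Y) := by
  obtain ⟨Z, -, ha, hZ, hblocked⟩ := hexists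
  refine ⟨hG.OsetP_inter_union hposs, ha, OsetP_inter_forbP, fun p hp hstatus hnpd => ?_⟩
  exact blockedDef_OsetP_of_blockedDef hG ha hposs hp hstatus hZ (hblocked p hp hstatus hnpd)

open Causal in
/-- If `X` and `Y` are disjoint node sets of a maxPDAG `G` with
`Y ⊆ possde(X,G)` and some valid adjustment set relative to `(X,Y)` exists, then the
O-set `pa(cn(X,Y,G),G) \ forb(X,Y,G)` is a valid adjustment set relative to `(X,Y)`. -/
theorem o_set_is_valid_adjustment_set
    {V : Type*} [Fintype V] (G : MixedGraph V) (X Y : Set V)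
    (hG : IsMaxPDAG G) (hdisj : Disjoint X Y)
    (hposs : Y ⊆ possdeSet G X)
    (hexists : ∃ Z, validAdjMax G X Y Z) :
    validAdjMax G X Y (paSet G (cn G X Y) \ forbP G X Y) := by
  exact o_set_is_valid_adjustment_set_general G X Y hG.isWeakMaxPDAG hposs hexists
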